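/- arXiv:1212.1644 — 3 statements merged into one kernel-verified Lean document; each statement's English description precedes it below -/
import Mathlib

section
/- Let x and s be real numbers with |x| ≤ 1 and s > 1. Then ∑_{n=1}^∞ x^{ω(n)} / n^s = ∏_{p prime} (1 + ∑_{j=1}^∞ x / p^{j·s}), where the product runs over all primes and both the series and the infinite product converge. -/
/-- The term `x ^ ω n / n ^ s` of the Dirichlet series of `x ^ ω`; it vanishes at `n = 0` when
`s ≠ 0`. -/
noncomputable def omegaTerm (x s : ℝ) (n : ℕ) : ℝ :=
  x ^ n.primeFactors.card / (n : ℝ) ^ s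

theorem omegaTerm_zero (x : ℝ) {s : ℝ} (hs : s ≠ 0) : omegaTerm x s 0 = 0 := by
  simp [omegaTerm, Real.zero_rpow hs]

theorem omegaTerm_one (x s : ℝ) : omegaTerm x s 1 = 1 := by
  simp [omegaTerm]

theorem omegaTerm_mul_of_coprime (x s : ℝ) {m n : ℕ} (h : m.Coprime n) :
    omegaTerm x s (m * n) = omegaTerm x s m * omegaTerm x s n := by
  simp only [omegaTerm]
  rw [h.primeFactors_mul, Finset.card_union_of_disjoint h.disjoint_primeFactors, pow_add,
    Nat.cast_mul, Real.mul_rpow m.cast_nonneg n.cast_nonneg, mul_div_mul_comm]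

theorem omegaTerm_prime_pow_succ (x s : ℝ) {p : ℕ} (hp : p.Prime) (j : ℕ) :
    omegaTerm x s (p ^ (j + 1)) = x / (p : ℝ) ^ (((j + 1 : ℕ) : ℝ) * s) := by
  rw [omegaTerm, Nat.primeFactors_prime_pow j.succ_ne_zero hp, Finset.card_singleton, pow_one,
    Nat.cast_pow, Real.rpow_natCast_mul p.cast_nonneg]

theorem summable_norm_omegaTerm {x s : ℝ} (hx : |x| ≤ 1) (hs : 1 < s) :
    Summable (‖omegaTerm x s ·‖) := by
  refine Summable.of_nonneg_of_le (fun _ => norm_nonneg _) (fun n => ?_)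
    (Real.summable_one_div_nat_rpow.2 hs)
  have hn : (0 : ℝ) ≤ (n : ℝ) ^ s := Real.rpow_nonneg n.cast_nonneg s
  rw [omegaTerm, norm_div, norm_pow, Real.norm_eq_abs, Real.norm_of_nonneg hn]
  gcongr
  exact pow_le_one₀ (abs_nonneg x) hx

theorem tsum_omegaTerm_prime_pow {x s : ℝ} (hx : |x| ≤ 1) (hs : 1 < s) {p : ℕ} (hp : p.Prime) :
    ∑' e, omegaTerm x s (p ^ e) =
      1 + ∑' j : ℕ, x / (p : ℝ) ^ (((j + 1 : ℕ) : ℝ) * s) := by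
  have h : Summable fun e => omegaTerm x s (p ^ e) :=
    (summable_norm_omegaTerm hx hs).of_norm.comp_injective (Nat.pow_right_injective hp.two_le)
  rw [h.tsum_eq_zero_add, pow_zero, omegaTerm_one]
  simp only [omegaTerm_prime_pow_succ x s hp]

/-- Euler-product identity: ∑ₙ x^(ω n)/n^s = ∏ₚ (1 + ∑ⱼ x / p^(j s)),
with both sides converging. -/
theorem stmt_7 (x s : ℝ) (hx : |x| ≤ 1) (hs : 1 < s) :
    Summable (fun n : ℕ => x ^ (n + 1).primeFactors.card / ((n + 1 : ℕ) : ℝ) ^ s) ∧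
    Multipliable (fun p : Nat.Primes =>
      1 + ∑' j : ℕ, x / ((p : ℕ) : ℝ) ^ (((j + 1 : ℕ) : ℝ) * s)) ∧
    ∑' n : ℕ, x ^ (n + 1).primeFactors.card / ((n + 1 : ℕ) : ℝ) ^ s =
      ∏' p : Nat.Primes, (1 + ∑' j : ℕ, x / ((p : ℕ) : ℝ) ^ (((j + 1 : ℕ) : ℝ) * s)) := by
  have hsum : Summable (omegaTerm x s) := (summable_norm_omegaTerm hx hs).of_norm
  have h0 : omegaTerm x s 0 = 0 := omegaTerm_zero x (by linarith)
  have hprod := EulerProduct.eulerProduct_hasProd (omegaTerm_one x s)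
    (omegaTerm_mul_of_coprime x s) (summable_norm_omegaTerm hx hs) h0
  simp only [fun p : Nat.Primes => tsum_omegaTerm_prime_pow hx hs p.prop] at hprod
  refine ⟨(summable_nat_add_iff 1).2 hsum, hprod.multipliable, ?_⟩
  rw [hprod.tprod_eq, hsum.tsum_eq_zero_add, h0, zero_add]
  rfl
end

section
/- Let t be a positive natural number and let x, s be real numbers with |x| ≤ 1 and s > 1. Define L(n) = ∑_{p ∈ primeFactors(n)} (v_p(n))^t, the sum of the t-th powers of the exponents appearing in the unique factorization of n (so L(1) = 0). Then ∑_{n=1}^∞ x^{L(n)} / n^s = ∏_{p prime} (1 + ∑_{j=1}^∞ x^{j^t} / p^{j·s}), where the product runs over all primes and both the series and the infinite product converge. -/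
/-- The sum of the `t`-th powers of the exponents in the prime factorization of `n`. -/
def exponentPowerSum (t n : ℕ) : ℕ := ∑ p ∈ n.primeFactors, n.factorization p ^ t

theorem exponentPowerSum_one (t : ℕ) : exponentPowerSum t 1 = 0 := by
  simp [exponentPowerSum]

theorem exponentPowerSum_mul_of_coprime (t : ℕ) {m n : ℕ} (h : m.Coprime n) :
    exponentPowerSum t (m * n) = exponentPowerSum t m + exponentPowerSum t n := by
  unfold exponentPowerSum
  rw [h.primeFactors_mul, Finset.sum_union h.disjoint_primeFactors]
  congr 1
  · refine Finset.sum_congr rfl fun p hp => ?_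
    rw [Nat.factorization_eq_of_coprime_left h (by simpa using hp)]
  · refine Finset.sum_congr rfl fun p hp => ?_
    rw [Nat.factorization_eq_of_coprime_right h (by simpa using hp)]

theorem exponentPowerSum_prime_pow_succ (t : ℕ) {p : ℕ} (hp : p.Prime) (j : ℕ) :
    exponentPowerSum t (p ^ (j + 1)) = (j + 1) ^ t := by
  simp [exponentPowerSum, Nat.primeFactors_prime_pow (Nat.succ_ne_zero j) hp, hp.factorization]

/-- The terms of the Dirichlet series with coefficients `x ^ exponentPowerSum t n`. -/
noncomputable def exponentPowerTerm (t : ℕ) (x s : ℝ) (n : ℕ) : ℝ :=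
  x ^ exponentPowerSum t n / (n : ℝ) ^ s

theorem exponentPowerTerm_zero (t : ℕ) (x : ℝ) {s : ℝ} (hs : s ≠ 0) :
    exponentPowerTerm t x s 0 = 0 := by
  simp [exponentPowerTerm, Real.zero_rpow hs]

theorem exponentPowerTerm_one (t : ℕ) (x s : ℝ) : exponentPowerTerm t x s 1 = 1 := by
  simp [exponentPowerTerm, exponentPowerSum_one]

theorem exponentPowerTerm_mul_of_coprime (t : ℕ) (x s : ℝ) {m n : ℕ} (h : m.Coprime n) :
    exponentPowerTerm t x s (m * n) = exponentPowerTerm t x s m * exponentPowerTerm t x s n := by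
  unfold exponentPowerTerm
  rw [exponentPowerSum_mul_of_coprime t h, pow_add, Nat.cast_mul,
    Real.mul_rpow m.cast_nonneg n.cast_nonneg, mul_div_mul_comm]

theorem exponentPowerTerm_prime_pow_succ (t : ℕ) (x s : ℝ) {p : ℕ} (hp : p.Prime) (j : ℕ) :
    exponentPowerTerm t x s (p ^ (j + 1)) =
      x ^ ((j + 1) ^ t) / (p : ℝ) ^ (((j + 1 : ℕ) : ℝ) * s) := by
  rw [exponentPowerTerm, exponentPowerSum_prime_pow_succ t hp, Nat.cast_pow,
    Real.rpow_mul p.cast_nonneg, Real.rpow_natCast]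

theorem summable_norm_exponentPowerTerm (t : ℕ) {x s : ℝ} (hx : |x| ≤ 1) (hs : 1 < s) :
    Summable (‖exponentPowerTerm t x s ·‖) := by
  refine Summable.of_nonneg_of_le (fun _ => norm_nonneg _) (fun n => ?_)
    (Real.summable_one_div_nat_rpow.mpr hs)
  have hn : (0 : ℝ) ≤ (n : ℝ) ^ s := by positivity
  rw [exponentPowerTerm, norm_div, norm_pow, Real.norm_eq_abs, Real.norm_of_nonneg hn]
  exact div_le_div_of_nonneg_right (pow_le_one₀ (abs_nonneg x) hx) hn

theorem tsum_exponentPowerTerm_prime_pow (t : ℕ) {x s : ℝ} (hx : |x| ≤ 1) (hs : 1 < s)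
    {p : ℕ} (hp : p.Prime) :
    ∑' e, exponentPowerTerm t x s (p ^ e) =
      1 + ∑' j : ℕ, x ^ ((j + 1) ^ t) / (p : ℝ) ^ (((j + 1 : ℕ) : ℝ) * s) := by
  have hsum : Summable fun e => exponentPowerTerm t x s (p ^ e) :=
    (summable_norm_exponentPowerTerm t hx hs).of_norm.comp_injective
      (Nat.pow_right_injective hp.two_le)
  rw [hsum.tsum_eq_zero_add, pow_zero, exponentPowerTerm_one]
  simp_rw [exponentPowerTerm_prime_pow_succ t x s hp]

/-- Euler-product identity for x^(L n) / n^s, where L(n) is the sum of the t-th powers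
of the exponents in the prime factorization of n. -/
theorem stmt_10 (t : ℕ) (ht : 0 < t) (x s : ℝ) (hx : |x| ≤ 1) (hs : 1 < s) :
    Summable (fun n : ℕ =>
      x ^ (∑ p ∈ (n + 1).primeFactors, ((n + 1).factorization p) ^ t) /
        ((n + 1 : ℕ) : ℝ) ^ s) ∧
    Multipliable (fun p : Nat.Primes =>
      1 + ∑' j : ℕ, x ^ ((j + 1) ^ t) / ((p : ℕ) : ℝ) ^ (((j + 1 : ℕ) : ℝ) * s)) ∧
    ∑' n : ℕ, x ^ (∑ p ∈ (n + 1).primeFactors, ((n + 1).factorization p) ^ t) /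
        ((n + 1 : ℕ) : ℝ) ^ s =
      ∏' p : Nat.Primes,
        (1 + ∑' j : ℕ, x ^ ((j + 1) ^ t) / ((p : ℕ) : ℝ) ^ (((j + 1 : ℕ) : ℝ) * s)) := by
  have hnorm := summable_norm_exponentPowerTerm t hx hs
  have hzero := exponentPowerTerm_zero t x (zero_lt_one.trans hs).ne'
  have hprod := EulerProduct.eulerProduct_hasProd (exponentPowerTerm_one t x s)
    (fun h => exponentPowerTerm_mul_of_coprime t x s h) hnorm hzero
  simp_rw [fun p : Nat.Primes => tsum_exponentPowerTerm_prime_pow t hx hs p.prop] at hprod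
  rw [hnorm.of_norm.tsum_eq_zero_add, hzero, zero_add] at hprod
  exact ⟨(summable_nat_add_iff 1).mpr hnorm.of_norm, hprod.multipliable, hprod.tprod_eq.symm⟩
end

section
/- Let x be a real number with |x| < 1. For a natural number m, let S(m) denote the number of pairs (a, b) of integers with a² + b² = m (this set of pairs is finite). Then the family (x^{a² + b²})_{(a,b) ∈ ℤ×ℤ} is summable, the family (S(m)·x^m)_{m ∈ ℕ} is summable, and ∑_{(a,b) ∈ ℤ×ℤ} x^{a² + b²} = ∑_{m=0}^∞ S(m)·x^m; in particular (∑_{n ∈ ℤ} x^{n²})² = ∑_{m=0}^∞ S(m)·x^m. -/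
/-- S(m): the number of representations of m as a sum of two squares of integers. -/
noncomputable def twoSquareReps (m : ℕ) : ℕ :=
  Nat.card {q : ℤ × ℤ // q.1 ^ 2 + q.2 ^ 2 = (m : ℤ)}

/-- The theta series `∑_{n ∈ ℤ} x ^ (n ^ 2)` converges absolutely for `|x| < 1`. -/
lemma summable_norm_pow_sq {x : ℝ} (hx : |x| < 1) :
    Summable (fun n : ℤ => ‖x ^ (n ^ 2).toNat‖) := by
  have hgeom : Summable (fun n : ℕ => ‖x ^ ((n : ℤ) ^ 2).toNat‖) := by
    refine (summable_geometric_of_lt_one (abs_nonneg x) hx).of_nonneg_of_le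
      (fun _ => norm_nonneg _) fun n => ?_
    have hn : ((n : ℤ) ^ 2).toNat = n ^ 2 := by
      rw [← Nat.cast_pow, Int.toNat_natCast]
    rw [hn, norm_pow, Real.norm_eq_abs]
    exact pow_le_pow_of_le_one (abs_nonneg x) hx.le (Nat.le_self_pow two_ne_zero n)
  exact Summable.of_nat_of_neg hgeom (by simpa only [neg_sq] using hgeom)

lemma pow_toNat_sq_add_sq (x : ℝ) (a b : ℤ) :
    x ^ (a ^ 2 + b ^ 2).toNat = x ^ (a ^ 2).toNat * x ^ (b ^ 2).toNat := by
  rw [Int.toNat_add (sq_nonneg a) (sq_nonneg b), pow_add]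

/-- Summing `x ^ (a ^ 2 + b ^ 2)` over the pairs with `a ^ 2 + b ^ 2 = m`. -/
lemma tsum_fiber_sq_add_sq (x : ℝ) (m : ℕ) :
    ∑' q : (fun q : ℤ × ℤ => (q.1 ^ 2 + q.2 ^ 2).toNat) ⁻¹' {m},
      x ^ (q.1.1 ^ 2 + q.1.2 ^ 2).toNat = (twoSquareReps m : ℝ) * x ^ m := by
  have hconst (q : (fun q : ℤ × ℤ => (q.1 ^ 2 + q.2 ^ 2).toNat) ⁻¹' {m}) :
      x ^ (q.1.1 ^ 2 + q.1.2 ^ 2).toNat = x ^ m := congrArg (x ^ ·) q.2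
  have hcard : Nat.card ((fun q : ℤ × ℤ => (q.1 ^ 2 + q.2 ^ 2).toNat) ⁻¹' {m}) =
      twoSquareReps m := by
    refine Nat.card_congr (Equiv.subtypeEquivRight fun q => ?_)
    have hq : 0 ≤ q.1 ^ 2 + q.2 ^ 2 := by positivity
    simp only [Set.mem_preimage, Set.mem_singleton_iff]
    omega
  rw [tsum_congr hconst, tsum_const, hcard, nsmul_eq_mul]

/-- The square of the theta series ∑_{n ∈ ℤ} x^(n²) is the generating function of S. -/
theorem stmt_13 (x : ℝ) (hx : |x| < 1) :
    Summable (fun q : ℤ × ℤ => x ^ (q.1 ^ 2 + q.2 ^ 2).toNat) ∧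
    Summable (fun m : ℕ => (twoSquareReps m : ℝ) * x ^ m) ∧
    ∑' q : ℤ × ℤ, x ^ (q.1 ^ 2 + q.2 ^ 2).toNat =
      ∑' m : ℕ, (twoSquareReps m : ℝ) * x ^ m ∧
    (∑' n : ℤ, x ^ (n ^ 2).toNat) ^ 2 = ∑' m : ℕ, (twoSquareReps m : ℝ) * x ^ m := by
  have hnorm := summable_norm_pow_sq hx
  have hpair : Summable (fun q : ℤ × ℤ => x ^ (q.1 ^ 2 + q.2 ^ 2).toNat) := by
    simpa only [pow_toNat_sq_add_sq] using summable_mul_of_summable_norm hnorm hnorm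
  have hfiber : HasSum (fun m : ℕ => (twoSquareReps m : ℝ) * x ^ m)
      (∑' q : ℤ × ℤ, x ^ (q.1 ^ 2 + q.2 ^ 2).toNat) := by
    rw [← funext (tsum_fiber_sq_add_sq x)]
    exact hpair.hasSum.tsum_fiberwise (fun q : ℤ × ℤ => (q.1 ^ 2 + q.2 ^ 2).toNat)
  refine ⟨hpair, hfiber.summable, hfiber.tsum_eq.symm, ?_⟩
  rw [hfiber.tsum_eq, sq, tsum_mul_tsum_of_summable_norm hnorm hnorm]
  simp only [pow_toNat_sq_add_sq]
end
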